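/- Let A be a Noetherian ring of global dimension n. Then the perfect derived category Perf(A) is generated by A in n cones, i.e. every bounded complex of finitely generated projective A-modules lies in ⟨A⟩_n, where ⟨A⟩_0 denotes direct summands of finite direct sums of shifts of A and ⟨A⟩_n is built using n cone operations. In particular the Rouquier dimension of Perf(A) is at most n. -/

import Mathlib

open CategoryTheory Limits Pretriangulated

universe u v

namespace TriDim

variable {T : Type u} [Category.{v} T] [HasZeroObject T] [Preadditive T] [HasShift T ℤ]
  [∀ n : ℤ, (CategoryTheory.shiftFunctor T n).Additive] [Pretriangulated T]

/-- `[E]₀` : objects isomorphic to finite direct sums of shifts of `E`. -/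
def isSumOfShifts (E X : T) : Prop :=
  ∃ (n : ℕ) (f : Fin n → ℤ), Nonempty (X ≅ ⨁ fun i => (shiftFunctor T (f i)).obj E)

/-- `[E]ₙ` : objects obtained from `[E]₀` by `n` cones. -/
def gen (E : T) : ℕ → Set T
  | 0 => {X | isSumOfShifts E X}
  | n + 1 => {F | ∃ Tr : Triangle T, Tr ∈ (distTriang T) ∧
      Nonempty (Tr.obj₂ ≅ F) ∧ Tr.obj₁ ∈ gen E n ∧ isSumOfShifts E Tr.obj₃}

/-- `⟨E⟩ₙ` : direct summands of objects of `[E]ₙ`. -/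
def thick (E : T) (n : ℕ) : Set T :=
  {X | ∃ Z ∈ gen E n, ∃ (s : X ⟶ Z) (r : Z ⟶ X), s ≫ r = 𝟙 X}

variable (T) in
/-- The Rouquier dimension of `T` is at most `n`:
there is a strong generator generating in `n` cones. -/
def rdimLE (n : ℕ) : Prop := ∃ E : T, ∀ X : T, X ∈ thick E n

end TriDim

universe w

namespace RDim

open CategoryTheory Limits Pretriangulated DerivedCategory

section Abelian

variable {C : Type u} [Category.{v} C] [Abelian C]

/-- A chain map out of a complex of projectives with zero differential which is zero on
homology is null-homotopic. -/
lemma nullhomotopic_of_ghost {W L : CochainComplex C ℤ} (hd : ∀ i j, W.d i j = 0)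
    (hP : ∀ i, Projective (W.X i)) (g : W ⟶ L)
    (hg : ∀ i, HomologicalComplex.homologyMap g i = 0) :
    Nonempty (Homotopy g 0) := by
  have key : ∀ i j, (ComplexShape.up ℤ).Rel j i →
      ∃ h : W.X i ⟶ L.X j, h ≫ L.d j i = g.f i := by
    intro i j hij
    have hc : HomologicalComplex.cyclesMap g i ≫ L.homologyπ i = 0 := by
      rw [← HomologicalComplex.homologyπ_naturality, hg, comp_zero]
    have hji : (ComplexShape.up ℤ).prev i = j := (ComplexShape.up ℤ).prev_eq' hij
    have hS : (ShortComplex.mk (L.toCycles j i) (L.homologyπ i)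
        (L.toCycles_comp_homologyπ j i)).Exact :=
      ShortComplex.exact_of_g_is_cokernel _ (L.homologyIsCokernel j i hji)
    have := W.isIso_iCycles i _ rfl (hd _ _)
    have := hP i
    refine ⟨hS.liftFromProjective (inv (W.iCycles i) ≫ HomologicalComplex.cyclesMap g i)
      (by simp [hc]), ?_⟩
    have h2 := hS.liftFromProjective_comp (inv (W.iCycles i) ≫ HomologicalComplex.cyclesMap g i)
      (by simp [hc])
    dsimp at h2
    have h3 := congrArg (fun t => t ≫ L.iCycles i) h2
    simpa using h3
  choose h hh using key
  have e : g = Homotopy.nullHomotopicMap' h := by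
    ext i
    rw [Homotopy.nullHomotopicMap'_f (k₂ := i - 1) (k₁ := i) (k₀ := i + 1) (by simp) (by simp),
      hd, hh]
    simp
  exact ⟨(Homotopy.ofEq e).trans (Homotopy.nullHomotopy' h)⟩

/-- The complex with zero differentials on the homology objects. -/
noncomputable def hcx (K : CochainComplex C ℤ) : CochainComplex C ℤ where
  X i := K.homology i
  d _ _ := 0

/-- The tautological isomorphism. -/
noncomputable def hcxIso (K : CochainComplex C ℤ) (i : ℤ) : (hcx K).X i ≅ K.homology i := Iso.refl _

lemma hcx_d (K : CochainComplex C ℤ) (i j : ℤ) : (hcx K).d i j = 0 := rfl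

lemma exists_hcx_map (K : CochainComplex C ℤ) (hP : ∀ i, Projective ((hcx K).X i)) :
    ∃ φ : hcx K ⟶ K, QuasiIso φ := by
  let s : ∀ i, (hcx K).X i ⟶ K.cycles i := fun i =>
    Projective.factorThru (hcxIso K i).hom (K.homologyπ i)
  have hs : ∀ i, s i ≫ K.homologyπ i = (hcxIso K i).hom := fun i => Projective.factorThru_comp _ _
  let φ : hcx K ⟶ K :=
    { f := fun i => s i ≫ K.iCycles i
      comm' := by intro i j _; simp [hcx_d] }
  refine ⟨φ, ⟨fun i => ?_⟩⟩
  rw [quasiIsoAt_iff_isIso_homologyMap]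
  have h1 := (hcx K).isIso_iCycles i _ rfl rfl
  have h2 := (hcx K).isIso_homologyπ _ i rfl rfl
  have h3 : HomologicalComplex.cyclesMap φ i = (hcx K).iCycles i ≫ s i := by
    rw [← cancel_mono (K.iCycles i)]
    simp [φ]
  have h4 : (hcx K).homologyπ i ≫ HomologicalComplex.homologyMap φ i =
      (hcx K).iCycles i ≫ (hcxIso K i).hom := by
    rw [HomologicalComplex.homologyπ_naturality, h3, Category.assoc, hs]
  have h5 : IsIso ((hcx K).homologyπ i ≫ HomologicalComplex.homologyMap φ i) := by
    rw [h4]; infer_instance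
  exact IsIso.of_isIso_comp_left ((hcx K).homologyπ i) _

variable [HasDerivedCategory.{w} C]

lemma Q_map_surj (K L : CochainComplex C ℤ) [K.IsKProjective] (f : Q.obj K ⟶ Q.obj L) :
    ∃ g : K ⟶ L, Q.map g = f := by
  obtain ⟨g, hg⟩ := (CochainComplex.IsKProjective.Qh_map_bijective K _).surjective
    ((quotientCompQhIso C).hom.app K ≫ f ≫ (quotientCompQhIso C).inv.app L)
  obtain ⟨g, rfl⟩ := (HomotopyCategory.quotient _ _).map_surjective g
  refine ⟨g, ?_⟩
  have := (quotientCompQhIso C).hom.naturality g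
  dsimp at this
  rw [hg] at this
  rw [← cancel_epi ((quotientCompQhIso C).hom.app K), ← this]
  simp

/-- Homology of `Q.obj K`. -/
noncomputable def hQ (K : CochainComplex C ℤ) (i : ℤ) :
    (homologyFunctor C i).obj (Q.obj K) ≅ K.homology i :=
  (homologyFunctorFactors C i).app K

lemma hQ_nat {K L : CochainComplex C ℤ} (g : K ⟶ L) (i : ℤ) :
    (homologyFunctor C i).map (Q.map g) ≫ (hQ L i).hom =
      (hQ K i).hom ≫ HomologicalComplex.homologyMap g i :=
  homologyFunctorFactors_hom_naturality g i

lemma homologyMap_zero_of {K L : CochainComplex C ℤ} (g : K ⟶ L) (i : ℤ)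
    (h : (homologyFunctor C i).map (Q.map g) = 0) : HomologicalComplex.homologyMap g i = 0 := by
  have := hQ_nat g i
  rw [h, zero_comp] at this
  rw [← cancel_epi (hQ K i).hom, ← this, comp_zero]

/-- A ghost map out of an object with projective homology is zero. -/
lemma ghost_zero {Y Z : DerivedCategory C} (b : ℤ)
    (hb : ∀ i, b < i → IsZero ((homologyFunctor C i).obj Y))
    (hP : ∀ i, Projective ((homologyFunctor C i).obj Y)) (f : Y ⟶ Z)
    (hf : ∀ i, (homologyFunctor C i).map f = 0) : f = 0 := by
  let K := Q.objPreimage Y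
  let L := Q.objPreimage Z
  let eK : Q.obj K ≅ Y := Q.objObjPreimageIso Y
  let eL : Q.obj L ≅ Z := Q.objObjPreimageIso Z
  have eH : ∀ i, (homologyFunctor C i).obj Y ≅ K.homology i := fun i =>
    (homologyFunctor C i).mapIso eK.symm ≪≫ hQ K i
  have hPK : ∀ i, Projective (K.homology i) := fun i => Projective.of_iso (eH i) (hP i)
  obtain ⟨φ, hφ⟩ := exists_hcx_map K hPK
  have : (hcx K).IsStrictlyLE b := by
    rw [CochainComplex.isStrictlyLE_iff]
    intro i hi
    exact (hb i hi).of_iso (eH i).symm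
  have hPW : ∀ i, Projective ((hcx K).X i) := hPK
  have : (hcx K).IsKProjective := CochainComplex.isKProjective_of_projective _ b
  obtain ⟨g, hg⟩ := Q_map_surj (hcx K) L (Q.map φ ≫ eK.hom ≫ f ≫ eL.inv)
  obtain ⟨H⟩ := nullhomotopic_of_ghost (fun _ _ => rfl) hPW g (fun i =>
    homologyMap_zero_of g i (by rw [hg]; simp [hf]))
  have h0 := DerivedCategory.Q_map_eq_of_homotopy _ H
  rw [hg, Functor.map_zero] at h0
  have h1 : eK.hom ≫ f ≫ eL.inv = 0 := by
    rw [← cancel_epi (Q.map φ), h0, comp_zero]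
  rw [← cancel_epi eK.hom, ← cancel_mono eL.inv]
  simpa using h1

lemma exists_from_single (P : C) [Projective P] (Y : DerivedCategory C) (i : ℤ)
    (x : P ⟶ (homologyFunctor C i).obj Y) :
    ∃ (φ : Q.obj ((HomologicalComplex.single C (ComplexShape.up ℤ) i).obj P) ⟶ Y)
      (t : P ⟶ (homologyFunctor C i).obj (Q.obj ((HomologicalComplex.single C (ComplexShape.up ℤ) i).obj P))),
      t ≫ (homologyFunctor C i).map φ = x := by
  let K := Q.objPreimage Y
  let eK : Q.obj K ≅ Y := Q.objObjPreimageIso Y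
  let x' : P ⟶ K.homology i := x ≫ (homologyFunctor C i).map eK.inv ≫
    (hQ K i).hom
  let y : P ⟶ K.cycles i := Projective.factorThru x' (K.homologyπ i)
  have hy : y ≫ K.homologyπ i = x' := Projective.factorThru_comp _ _
  let ψ : (HomologicalComplex.single C (ComplexShape.up ℤ) i).obj P ⟶ K :=
    HomologicalComplex.mkHomFromSingle (y ≫ K.iCycles i) (by simp)
  let S := (HomologicalComplex.single C (ComplexShape.up ℤ) i).obj P
  let t : P ⟶ S.homology i := (HomologicalComplex.singleObjCyclesSelfIso _ i P).inv ≫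
    S.homologyπ i
  have ht : t ≫ HomologicalComplex.homologyMap ψ i = x' := by
    have h3 : (HomologicalComplex.singleObjCyclesSelfIso (ComplexShape.up ℤ) i P).inv ≫
        HomologicalComplex.cyclesMap ψ i = y := by
      rw [← cancel_mono (K.iCycles i)]
      simp [ψ]
    simp only [t, Category.assoc]
    rw [HomologicalComplex.homologyπ_naturality, reassoc_of% h3, hy]
  refine ⟨Q.map ψ ≫ eK.hom, t ≫ (hQ S i).inv, ?_⟩
  have h5 := hQ_nat ψ i
  rw [← cancel_mono ((homologyFunctor C i).map eK.inv), ← cancel_mono (hQ K i).hom]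
  simp only [Category.assoc, Functor.map_comp]
  rw [← Functor.map_comp_assoc _ eK.hom, eK.hom_inv_id, CategoryTheory.Functor.map_id, Category.id_comp, h5]
  simp only [S, Iso.inv_hom_id_assoc]
  exact ht

end Abelian

section Mod

variable {R : Type} [Ring R]

lemma pd_of_res (k : ℕ) : ∀ (M : ModuleCat.{0} R) (P : ℕ → ModuleCat.{0} R)
      (f : ∀ i : ℕ, P (i + 1) ⟶ P i) (π : P 0 ⟶ M)
      (_ : ∀ i, CategoryTheory.Projective (P i)) (_ : Function.Surjective π)
      (_ : Function.Exact (f 0) π) (_ : ∀ i, Function.Exact (f (i + 1)) (f i))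
      (_ : ∀ i, k ≤ i → Limits.IsZero (P i)), HasProjectiveDimensionLT M k := by
  induction k with
  | zero =>
    intro M P f π hP hπ h0 h1 hz
    apply IsZero.hasProjectiveDimensionLT_zero
    have := ModuleCat.subsingleton_of_isZero (hz 0 le_rfl)
    have : Subsingleton M := hπ.subsingleton
    exact ModuleCat.isZero_of_subsingleton M
  | succ k ih =>
    intro M P f π hP hπ h0 h1 hz
    have hmem : ∀ x, f 0 x ∈ LinearMap.ker π.hom := fun x => (h0 _).2 ⟨x, rfl⟩
    have hN : HasProjectiveDimensionLT (ModuleCat.of R (LinearMap.ker π.hom)) k := by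
      refine ih _ (fun i => P (i + 1)) (fun i => f (i + 1))
        (ModuleCat.ofHom ((f 0).hom.codRestrict (LinearMap.ker π.hom) hmem))
        (fun i => hP _) ?_ ?_ (fun i => h1 _) (fun i hi => hz _ (by omega))
      · rintro ⟨y, hy⟩
        obtain ⟨x, hx⟩ := (h0 y).1 hy
        exact ⟨x, Subtype.ext hx⟩
      · intro x
        refine Iff.trans ?_ (h1 0 x)
        constructor
        · intro h; exact congrArg Subtype.val h
        · intro h; exact Subtype.ext h
    let S : ShortComplex (ModuleCat.{0} R) :=
      ShortComplex.mk (ModuleCat.ofHom (LinearMap.ker π.hom).subtype) π (by ext x; exact x.2)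
    have hS : S.ShortExact :=
      { exact := by
          rw [ShortComplex.moduleCat_exact_iff]
          intro x hx
          exact ⟨⟨x, hx⟩, rfl⟩
        mono_f := (ModuleCat.mono_iff_injective _).2 Subtype.val_injective
        epi_g := (ModuleCat.epi_iff_surjective _).2 hπ }
    have := hP 0
    exact hS.hasProjectiveDimensionLT_X₃ k hN
      (show HasProjectiveDimensionLT (P 0) (k + 1) from inferInstance)

variable [HasDerivedCategory.{0} (ModuleCat.{0} R)]

/-- Homology. -/
noncomputable abbrev H (i : ℤ) : DerivedCategory (ModuleCat.{0} R) ⥤ ModuleCat.{0} R :=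
  homologyFunctor (ModuleCat.{0} R) i

/-- Bounded, finitely generated homology. -/
def Good (Y : DerivedCategory (ModuleCat.{0} R)) : Prop :=
  (∀ i, Module.Finite R ((H i).obj Y)) ∧ ∃ a b : ℤ, ∀ i, (i < a ∨ b < i) → IsZero ((H i).obj Y)

variable (R) in
/-- The free module of rank one. -/
noncomputable abbrev E : DerivedCategory (ModuleCat.{0} R) :=
  (singleFunctor (ModuleCat.{0} R) 0).obj (ModuleCat.of R R)

instance : CategoryTheory.Projective (ModuleCat.of R R) :=
  ModuleCat.projective_of_free (Module.Basis.singleton (Fin 1) R)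

variable (R) in
/-- shifts of singles -/
noncomputable def shiftE (m : ℤ) : (shiftFunctor _ m).obj (E R) ≅
    Q.obj ((HomologicalComplex.single (ModuleCat.{0} R) (ComplexShape.up ℤ) (-m)).obj
      (ModuleCat.of R R)) :=
  ((singleFunctors (ModuleCat.{0} R)).shiftIso m (-m) 0 (by simp)).app (ModuleCat.of R R)

lemma H_shiftE_zero (m i : ℤ) (h : i ≠ -m) : IsZero ((H (R := R) i).obj ((shiftFunctor _ m).obj (E R))) :=
  (HomologicalComplex.isZero_single_obj_homology _ _ (ModuleCat.of R R) i h).of_iso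
    ((H i).mapIso (shiftE R m) ≪≫ hQ _ i)

variable (R) in
/-- homology -/
noncomputable def H_shiftE (m : ℤ) :
    (H (-m)).obj ((shiftFunctor _ m).obj (E R)) ≅ ModuleCat.of R R :=
  ((H (-m)).mapIso (shiftE R m) ≪≫ hQ _ _ ≪≫ HomologicalComplex.singleObjHomologySelfIso _ _ _)

lemma H_shiftE_proj (m i : ℤ) :
    CategoryTheory.Projective ((H i).obj ((shiftFunctor _ m).obj (E R))) := by
  by_cases h : i = -m
  · subst h
    exact Projective.of_iso (H_shiftE R m).symm inferInstance
  · exact Projective.of_iso (H_shiftE_zero (R := R) m i h).isoZero.symm inferInstance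

lemma H_shiftE_fin (m i : ℤ) :
    Module.Finite R ((H i).obj ((shiftFunctor _ m).obj (E R))) := by
  by_cases h : i = -m
  · subst h
    exact Module.Finite.equiv (H_shiftE R m).symm.toLinearEquiv
  · have := ModuleCat.subsingleton_of_isZero (H_shiftE_zero (R := R) m i h)
    infer_instance

/-- homology of sums -/
noncomputable def H_sum {N : ℕ} (f : Fin N → ℤ) (i : ℤ) :
    (H i).obj (⨁ fun j => (shiftFunctor _ (f j)).obj (E R)) ≅
      ⨁ fun j => (H i).obj ((shiftFunctor _ (f j)).obj (E R)) :=
  (H i).mapBiproduct _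

lemma sum_proj {N : ℕ} (f : Fin N → ℤ) (i : ℤ) :
    CategoryTheory.Projective ((H i).obj (⨁ fun j => (shiftFunctor _ (f j)).obj (E R))) := by
  have := fun j => H_shiftE_proj (R := R) (f j) i
  exact Projective.of_iso (H_sum f i).symm inferInstance

lemma sum_good {N : ℕ} (f : Fin N → ℤ) :
    Good (⨁ fun j => (shiftFunctor _ (f j)).obj (E R)) := by
  refine ⟨fun i => ?_, ?_⟩
  · have := fun j => H_shiftE_fin (R := R) (f j) i
    exact Module.Finite.equiv (H_sum f i ≪≫ ModuleCat.biproductIsoPi _).symm.toLinearEquiv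
  · obtain ⟨a, ha⟩ := (Set.finite_range f).bddAbove
    obtain ⟨b, hb⟩ := (Set.finite_range f).bddBelow
    refine ⟨-a, -b, fun i hi => ?_⟩
    have := fun j => ModuleCat.subsingleton_of_isZero (H_shiftE_zero (R := R) (f j) i (by
      have := ha ⟨j, rfl⟩
      have := hb ⟨j, rfl⟩
      omega))
    exact (ModuleCat.isZero_of_subsingleton _).of_iso (H_sum f i ≪≫ ModuleCat.biproductIsoPi _)

lemma sum_shift {X : DerivedCategory (ModuleCat.{0} R)} (h : TriDim.isSumOfShifts (E R) X) :
    TriDim.isSumOfShifts (E R) ((shiftFunctor _ (1 : ℤ)).obj X) := by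
  obtain ⟨n, f, ⟨e⟩⟩ := h
  refine ⟨n, fun i => f i + 1, ⟨(shiftFunctor _ (1 : ℤ)).mapIso e ≪≫
    (shiftFunctor _ (1 : ℤ)).mapBiproduct _ ≪≫
    biproduct.mapIso (fun j => ((shiftFunctorAdd _ (f j) 1).app (E R)).symm)⟩⟩

/-- Free cover. -/
lemma exists_cover {Y : DerivedCategory (ModuleCat.{0} R)} (hY : Good Y) :
    ∃ (N : ℕ) (f : Fin N → ℤ) (p : (⨁ fun j => (shiftFunctor _ (f j)).obj (E R)) ⟶ Y),
      ∀ i, Epi ((H i).map p) := by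
  obtain ⟨hfin, a, b, hz⟩ := hY
  have hgen : ∀ i, ∃ s : Set ((H i).obj Y), s.Finite ∧ Submodule.span R s = ⊤ := fun i => by
    obtain ⟨s, hs⟩ := (hfin i).fg_top
    exact ⟨s, s.finite_toSet, hs⟩
  choose s hs hspan using hgen
  let T : Set (Σ i : ℤ, (H i).obj Y) := ⋃ i ∈ Set.Icc a b, (fun x => Sigma.mk i x) '' s i
  have hT : T.Finite := (Set.finite_Icc a b).biUnion (fun i _ => (hs i).image _)
  obtain ⟨N, g, -, hg⟩ := hT.fin_param
  have hc : ∀ j : Fin N, ∃ (φ : (shiftFunctor _ (-(g j).1)).obj (E R) ⟶ Y),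
      ∃ z, (H (g j).1).map φ z = (g j).2 := by
    intro j
    obtain ⟨i, x⟩ := g j
    obtain ⟨φ, t, h⟩ := exists_from_single (ModuleCat.of R R) Y i
      (ModuleCat.ofHom (LinearMap.toSpanSingleton R _ x))
    obtain ⟨e⟩ : Nonempty ((shiftFunctor _ (-i)).obj (E R) ≅
      Q.obj ((HomologicalComplex.single (ModuleCat.{0} R) (ComplexShape.up ℤ) i).obj
      (ModuleCat.of R R))) := by
      have := shiftE R (-i)
      rw [neg_neg] at this
      exact ⟨this⟩
    refine ⟨e.hom ≫ φ, ((H i).map e.inv) (t (1 : R)), ?_⟩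
    have h2 : (t ≫ (H i).map e.inv) ≫ (H i).map (e.hom ≫ φ) =
        ModuleCat.ofHom (LinearMap.toSpanSingleton R _ x) := by
      rw [← h, Category.assoc, ← Functor.map_comp, e.inv_hom_id_assoc]
    have h3 := congrArg (fun q => q.hom (1 : R)) h2
    refine Eq.trans h3 ?_
    exact one_smul R x
  choose φ z hφ using hc
  refine ⟨N, fun j => -(g j).1, biproduct.desc φ, fun i => ?_⟩
  rw [ModuleCat.epi_iff_range_eq_top, eq_top_iff]
  by_cases hi : i ∈ Set.Icc a b
  · rw [← hspan i, Submodule.span_le]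
    intro x hx
    have : (⟨i, x⟩ : Σ i : ℤ, (H i).obj Y) ∈ Set.range g := by
      rw [hg]
      exact Set.mem_biUnion hi ⟨x, hx, rfl⟩
    obtain ⟨j, hj⟩ := this
    have h4 : ∃ z, (H i).map (φ j) z = x := by
      have h5 : ∃ z, (H (g j).1).map (φ j) z = (g j).2 := ⟨_, hφ j⟩
      have key : ∀ (q : Σ i : ℤ, (H i).obj Y) (W) (ψ : W ⟶ Y),
          (∃ z, (H q.1).map ψ z = q.2) → q = ⟨i, x⟩ → ∃ z, (H i).map ψ z = x := by
        rintro q W ψ h rfl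
        exact h
      exact key _ _ _ h5 hj
    obtain ⟨y, hy⟩ := h4
    refine ⟨(H i).map (biproduct.ι (fun j => (shiftFunctor _ (-(g j).1)).obj (E R)) j) y, ?_⟩
    rw [← hy]
    have h6 := congrArg (fun q => q.hom y) ((H i).map_comp
      (biproduct.ι (fun j => (shiftFunctor _ (-(g j).1)).obj (E R)) j) (biproduct.desc φ))
    rw [biproduct.ι_desc] at h6
    exact h6.symm
  · have := ModuleCat.subsingleton_of_isZero (hz i (by
      simp only [Set.mem_Icc, not_and_or, not_le] at hi
      exact hi))
    intro x _
    exact ⟨0, Subsingleton.elim _ _⟩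


/-- `gen` with index shifted by one, starting with zero objects. -/
def genx : ℕ → Set (DerivedCategory (ModuleCat.{0} R))
  | 0 => {X | IsZero X}
  | k + 1 => TriDim.gen (E R) k

lemma genx_succ (k : ℕ) {F F' S : DerivedCategory (ModuleCat.{0} R)} (hF : F ∈ genx (R := R) k)
    (hS : TriDim.isSumOfShifts (E R) S) (a : F ⟶ F') (b : F' ⟶ S) (c : S ⟶ F⟦(1 : ℤ)⟧)
    (h : Triangle.mk a b c ∈ distTriang _) : F' ∈ genx (R := R) (k + 1) := by
  cases k with
  | zero =>
    have hF0 : IsZero F := hF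
    have : IsIso b := (Triangle.isZero₁_iff_isIso₂ _ h).1 hF0
    obtain ⟨n, f, ⟨e⟩⟩ := hS
    exact ⟨n, f, ⟨asIso b ≪≫ e⟩⟩
  | succ k => exact ⟨_, h, ⟨Iso.refl _⟩, hF, hS⟩

lemma step [IsNoetherianRing R] (k m : ℕ) {Z F X : DerivedCategory (ModuleCat.{0} R)}
    (u : Z ⟶ F) (v : F ⟶ X) (w : X ⟶ Z⟦(1 : ℤ)⟧) (h : Triangle.mk u v w ∈ distTriang _)
    (hF : F ∈ genx (R := R) k) (hZ : Good Z)
    (hpd : ∀ i, HasProjectiveDimensionLT ((H i).obj Z) (m + 1)) :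
    ∃ (F' Z' : DerivedCategory (ModuleCat.{0} R)) (q : Z ⟶ Z') (u' : Z' ⟶ F') (v' : F' ⟶ X),
      Triangle.mk u' v' (w ≫ q⟦(1 : ℤ)⟧') ∈ distTriang _ ∧ F' ∈ genx (R := R) (k + 1) ∧
      Good Z' ∧ (∀ i, HasProjectiveDimensionLT ((H i).obj Z') (m - 1 + 1)) ∧
      ∀ i, (H i).map q = 0 := by
  obtain ⟨N, f, p, hp⟩ := exists_cover hZ
  obtain ⟨Z', q, r, hq⟩ := distinguished_cocone_triangle p
  obtain ⟨F', s, t, hs⟩ := distinguished_cocone_triangle (p ≫ u)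
  have o := Triangulated.someOctahedron rfl hq h hs
  have hq0 : ∀ i, (H i).map q = 0 := fun i =>
    (HomologySequence.epi_homologyMap_mor₁_iff _ hq i).1 (hp i)
  have hd : ∀ i, ∃ (d : (H i).obj Z' ⟶ (H (i + 1)).obj (⨁ fun j => (shiftFunctor _ (f j)).obj (E R)))
      (e : d ≫ (H (i + 1)).map p = 0), (ShortComplex.mk d _ e).ShortExact := fun i =>
    ⟨HomologySequence.δ (Triangle.mk p q r) i (i + 1) rfl,
      HomologySequence.δ_comp _ hq i (i + 1) rfl,
    { exact := HomologySequence.exact₁ _ hq i (i + 1) rfl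
      mono_f := (HomologySequence.exact₃ _ hq i (i + 1) rfl).mono_g (hq0 i)
      epi_g := hp (i + 1) }⟩
  have hg := sum_good (R := R) f
  refine ⟨F', Z', q, o.m₁, o.m₃, o.mem, ?_, ?_, ?_, hq0⟩
  · exact genx_succ k hF (sum_shift ⟨N, f, ⟨Iso.refl _⟩⟩) s t (-(p ≫ u)⟦(1 : ℤ)⟧')
      (rot_of_distTriang _ hs)
  · refine ⟨fun i => ?_, ?_⟩
    · have := hg.1 (i + 1)
      obtain ⟨d, e, hse⟩ := hd i
      exact Module.Finite.of_injective d.hom ((ModuleCat.mono_iff_injective d).1 hse.mono_f)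
    · obtain ⟨a, b, hab⟩ := hg.2
      refine ⟨a - 1, b - 1, fun i hi => ?_⟩
      obtain ⟨d, e, hse⟩ := hd i
      have : Mono d := hse.mono_f
      exact IsZero.of_mono d (hab (i + 1) (by omega))
  · intro i
    have h2 := sum_proj (R := R) f (i + 1)
    obtain ⟨d, e, hse⟩ := hd i
    have h3 : HasProjectiveDimensionLT
      ((H (i + 1)).obj (⨁ fun j => (shiftFunctor _ (f j)).obj (E R))) 1 := inferInstance
    refine hse.hasProjectiveDimensionLT_X₁ (m - 1 + 1)
      (hasProjectiveDimensionLT_of_ge _ 1 (m - 1 + 1) (by omega)) ?_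
    have := hpd (i + 1)
    exact hasProjectiveDimensionLT_of_ge ((H (i + 1)).obj Z) (m + 1) _ (by omega)

lemma good_shift {X : DerivedCategory (ModuleCat.{0} R)} (hX : Good X) (n : ℤ) :
    Good ((shiftFunctor _ n).obj X) := by
  obtain ⟨h1, a, b, h2⟩ := hX
  have e : ∀ i, (H i).obj ((shiftFunctor _ n).obj X) ≅ (H (n + i)).obj X := fun i =>
    ((H (R := R) 0).shiftIso n i (n + i) rfl).app X
  refine ⟨fun i => ?_, a - n, b - n, fun i hi => (h2 (n + i) (by omega)).of_iso (e i)⟩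
  have := h1 (n + i)
  exact Module.Finite.equiv (e i).symm.toLinearEquiv

lemma good_Q [IsNoetherianRing R] (X : CochainComplex (ModuleCat.{0} R) ℤ)
    (hfin : ∀ i, Module.Finite R (X.X i))
    (hb : ∃ a b : ℤ, ∀ i, (i < a ∨ b < i) → Limits.IsZero (X.X i)) : Good (Q.obj X) := by
  obtain ⟨a, b, hab⟩ := hb
  refine ⟨fun i => ?_, a, b, fun i hi => ?_⟩
  · have := hfin i
    have h1 : Module.Finite R (X.cycles i) :=
      Module.Finite.of_injective (X.iCycles i).hom
        ((ModuleCat.mono_iff_injective _).1 inferInstance)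
    have h2 : Module.Finite R (X.homology i) :=
      Module.Finite.of_surjective (X.homologyπ i).hom
        ((ModuleCat.epi_iff_surjective _).1 inferInstance)
    exact Module.Finite.equiv (hQ X i).symm.toLinearEquiv
  · have h1 : IsZero (X.cycles i) := IsZero.of_mono (X.iCycles i) (hab i hi)
    exact (IsZero.of_epi (X.homologyπ i) h1).of_iso (hQ X i)

open scoped ZeroObject in
lemma main [IsNoetherianRing R] (n : ℕ)
    (hpd : ∀ M : ModuleCat.{0} R, HasProjectiveDimensionLT M (n + 1))
    (X : DerivedCategory (ModuleCat.{0} R)) (hX : Good X) :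
    X ∈ TriDim.thick (E R) n := by
  have claim : ∀ k : ℕ, ∃ (Z F : DerivedCategory (ModuleCat.{0} R)) (u : Z ⟶ F) (v : F ⟶ X)
      (w : X ⟶ Z⟦(1 : ℤ)⟧), Triangle.mk u v w ∈ distTriang _ ∧ F ∈ genx (R := R) k ∧ Good Z ∧
      ∀ i, HasProjectiveDimensionLT ((H i).obj Z) (n - k + 1) := by
    intro k
    induction k with
    | zero =>
      obtain ⟨Z, a, b, hT⟩ := distinguished_cocone_triangle₁ (0 : (0 : DerivedCategory (ModuleCat.{0} R)) ⟶ X)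
      refine ⟨_, _, _, _, _, hT, isZero_zero _, ?_, fun i => hpd _⟩
      have hw : IsIso b := (Triangle.isZero₂_iff_isIso₃ _ hT).1 (isZero_zero _)
      have e : Z ≅ (shiftFunctor _ (-1 : ℤ)).obj X :=
        (shiftShiftNeg Z (1 : ℤ)).symm ≪≫ (shiftFunctor _ (-1 : ℤ)).mapIso (asIso b).symm
      obtain ⟨h1, a', b', h2⟩ := good_shift hX (-1)
      refine ⟨fun i => ?_, a', b', fun i hi => (h2 i hi).of_iso ((H i).mapIso e)⟩
      have := h1 i
      exact Module.Finite.equiv ((H i).mapIso e).symm.toLinearEquiv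
    | succ k ih =>
      obtain ⟨Z, F, u, v, w, h, hF, hZ, hp⟩ := ih
      obtain ⟨F', Z', q, u', v', h', hF', hZ', hp', -⟩ := step k (n - k) u v w h hF hZ hp
      exact ⟨Z', F', u', v', _, h', hF', hZ', fun i => by
        have := hp' i
        rwa [show n - k - 1 = n - (k + 1) by omega] at this⟩
  obtain ⟨Z, F, u, v, w, h, hF, hZ, hp⟩ := claim n
  obtain ⟨F', Z', q, u', v', h', hF', hZ', hp', hq⟩ := step n (n - n) u v w h hF hZ hp
  obtain ⟨-, a, b, hab⟩ := hZ
  have q0 : q = 0 := ghost_zero b (fun i hi => hab i (Or.inr hi)) (fun i => by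
    have := hp i
    rw [Nat.sub_self, zero_add] at this
    infer_instance) q hq
  obtain ⟨s, hs⟩ := Triangle.coyoneda_exact₃ _ h' (𝟙 X) (by
    simp only [Triangle.mk_mor₃, q0, Functor.map_zero, comp_zero]
    exact comp_zero)
  exact ⟨F', hF', s, v', hs.symm⟩

end Mod

end RDim

open DerivedCategory in
/-- Let `R` be a Noetherian ring of global dimension at most `n` (every
module admits a projective resolution of length `n`).  Then `Perf(R)` is generated by `R` in
`n` cones: every bounded complex of finitely generated projective `R`-modules lies in
`⟨R⟩ₙ` inside the derived category.  In particular `Rdim Perf(R) ≤ n`. -/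
theorem rouquier_dim_le_global_dimension
    (R : Type) [Ring R] [IsNoetherianRing R] (n : ℕ)
    [HasDerivedCategory.{0} (ModuleCat.{0} R)]
    -- `R` has global dimension at most `n`
    (hgldim : ∀ M : ModuleCat.{0} R, ∃ (P : ℕ → ModuleCat.{0} R)
      (f : ∀ i : ℕ, P (i + 1) ⟶ P i) (π : P 0 ⟶ M),
        (∀ i, CategoryTheory.Projective (P i)) ∧ Function.Surjective π ∧
        Function.Exact (f 0) π ∧ (∀ i, Function.Exact (f (i + 1)) (f i)) ∧
        (∀ i, n < i → Limits.IsZero (P i))) :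
    -- every bounded complex of finitely generated projective modules lies in `⟨R⟩ₙ`,
    (∀ X : CochainComplex (ModuleCat.{0} R) ℤ,
      (∀ i, CategoryTheory.Projective (X.X i)) →
      (∀ i, Module.Finite R (X.X i)) →
      (∃ a b : ℤ, ∀ i, (i < a ∨ b < i) → Limits.IsZero (X.X i)) →
      DerivedCategory.Q.obj X ∈
        TriDim.thick ((DerivedCategory.singleFunctor (ModuleCat.{0} R) 0).obj
          (ModuleCat.of R R)) n) ∧
    -- in particular the Rouquier dimension of `Perf(R)` is at most `n`
    (∃ E : DerivedCategory (ModuleCat.{0} R),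
      ∀ X : CochainComplex (ModuleCat.{0} R) ℤ,
        (∀ i, CategoryTheory.Projective (X.X i)) →
        (∀ i, Module.Finite R (X.X i)) →
        (∃ a b : ℤ, ∀ i, (i < a ∨ b < i) → Limits.IsZero (X.X i)) →
        DerivedCategory.Q.obj X ∈ TriDim.thick E n) := by
  
  have hpd : ∀ M : ModuleCat.{0} R, HasProjectiveDimensionLT M (n + 1) := by
    intro M
    obtain ⟨P, f, π, h1, h2, h3, h4, h5⟩ := hgldim M
    exact RDim.pd_of_res (n + 1) M P f π h1 h2 h3 h4 (fun i hi => h5 i (by omega))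
  have key := fun X (hfin : ∀ i, Module.Finite R (X.X i)) hb =>
    RDim.main n hpd (DerivedCategory.Q.obj X) (RDim.good_Q X hfin hb)
  exact ⟨fun X _ h2 h3 => key X h2 h3, _, fun X _ h2 h3 => key X h2 h3⟩
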